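/- Let p, q, r, s be four points in strictly convex position that appear in this cyclic order along the boundary of their convex hull. Then the 4-cycle p r s q p is acute or the 4-cycle p r q s p is acute. -/

import Mathlib

/-!
If segments `pr` and `qs` meet at `o`, then the side `p → q` is `p → o` followed by `o → q`, that
is, a nonnegative combination of `p → r` and `s → q`. When these two directions make a non-obtuse
angle, so do `p → q` and `p → r`, and the same computation at the other three vertices shows that
`prsq` is acute. When they make an obtuse angle, `p → r` and `q → s` do not, and exchanging `q`
and `s` shows that `prqs` is acute.
-/

open EuclideanGeometry Real

noncomputable section

abbrev Plane := EuclideanSpace ℝ (Fin 2)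

/-- Four points are in strictly convex position: each is a vertex of their convex hull
and no three of them are collinear. -/
def StrictlyConvexPos (p₁ p₂ p₃ p₄ : Plane) : Prop :=
  (∀ x ∈ ({p₁, p₂, p₃, p₄} : Set Plane),
      x ∉ convexHull ℝ (({p₁, p₂, p₃, p₄} : Set Plane) \ {x})) ∧
  (∀ x ∈ ({p₁, p₂, p₃, p₄} : Set Plane), ∀ y ∈ ({p₁, p₂, p₃, p₄} : Set Plane),
      ∀ z ∈ ({p₁, p₂, p₃, p₄} : Set Plane),
      x ≠ y → y ≠ z → x ≠ z → ¬ Collinear ℝ ({x, y, z} : Set Plane))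

section InnerProductSpace

open scoped RealInnerProductSpace

variable {V P : Type*} [NormedAddCommGroup V] [InnerProductSpace ℝ V] [MetricSpace P]
  [NormedAddTorsor V P]

theorem angle_le_pi_div_two_iff_inner_nonneg {x y : V} :
    InnerProductGeometry.angle x y ≤ π / 2 ↔ 0 ≤ ⟪x, y⟫ := by
  rcases eq_or_ne x 0 with rfl | hx
  · simp
  rcases eq_or_ne y 0 with rfl | hy
  · simp
  rw [InnerProductGeometry.angle, arccos_le_pi_div_two, le_div_iff₀ (by positivity),
    zero_mul]

/-- The 4-cycle `a b c d a` is acute: its vertices are distinct and its four angles are at most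
`π / 2`. Distinctness is included because Mathlib sets the angle between a zero vector and any other
vector to `π / 2`, which would make degenerate angles pass the test. -/
structure IsAcuteFourCycle (a b c d : P) : Prop where
  nodup : [a, b, c, d].Nodup
  angles_le : ∠ d a b ≤ π / 2 ∧ ∠ a b c ≤ π / 2 ∧ ∠ b c d ≤ π / 2 ∧ ∠ c d a ≤ π / 2

theorem inner_vsub_vsub_nonneg_of_wbtw {x x' y z o : P} (hx : Wbtw ℝ x o x') (hz : Wbtw ℝ y o z)
    (h : 0 ≤ ⟪x -ᵥ x', z -ᵥ y⟫) : 0 ≤ ⟪x -ᵥ y, z -ᵥ y⟫ := by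
  obtain ⟨c, ⟨hc, -⟩, hco⟩ := hx
  obtain ⟨a, ⟨ha, -⟩, hao⟩ := hz
  have hxy : x -ᵥ y = c • (x -ᵥ x') + a • (z -ᵥ y) := by
    rw [← AffineMap.left_vsub_lineMap, ← AffineMap.lineMap_vsub_left, hco, hao,
      vsub_add_vsub_cancel]
  rw [hxy, inner_add_left, real_inner_smul_left, real_inner_smul_left]
  exact add_nonneg (mul_nonneg hc h) (mul_nonneg ha real_inner_self_nonneg)

theorem angle_le_pi_div_two_of_wbtw {x x' y z o : P} (hx : Wbtw ℝ x o x') (hz : Wbtw ℝ y o z)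
    (h : 0 ≤ ⟪x -ᵥ x', z -ᵥ y⟫) : ∠ x y z ≤ π / 2 :=
  angle_le_pi_div_two_iff_inner_nonneg.2 (inner_vsub_vsub_nonneg_of_wbtw hx hz h)

theorem isAcuteFourCycle_of_wbtw {p q r s o : P} (hnodup : [p, q, r, s].Nodup)
    (hpr : Wbtw ℝ p o r) (hqs : Wbtw ℝ q o s) (h : 0 ≤ ⟪q -ᵥ s, r -ᵥ p⟫) :
    IsAcuteFourCycle p r s q := by
  have h_neg : 0 ≤ ⟪s -ᵥ q, p -ᵥ r⟫ := by
    rwa [← neg_vsub_eq_vsub_rev q s, ← neg_vsub_eq_vsub_rev r p, inner_neg_neg]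
  have at_p : ∠ q p r ≤ π / 2 := angle_le_pi_div_two_of_wbtw hqs hpr h
  have at_r : ∠ s r p ≤ π / 2 := angle_le_pi_div_two_of_wbtw hqs.symm hpr.symm h_neg
  have at_s : ∠ r s q ≤ π / 2 :=
    angle_le_pi_div_two_of_wbtw hpr.symm hqs.symm (by rwa [real_inner_comm])
  have at_q : ∠ p q s ≤ π / 2 :=
    angle_le_pi_div_two_of_wbtw hpr hqs (by rwa [real_inner_comm])
  rw [EuclideanGeometry.angle_comm] at at_r at_q
  exact ⟨by grind, at_p, at_r, at_s, at_q⟩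

theorem convex_position_acute_four_cycle_general {p q r s : P} (hnodup : [p, q, r, s].Nodup)
    (hcross : (affineSegment ℝ p r ∩ affineSegment ℝ q s).Nonempty) :
    IsAcuteFourCycle p r s q ∨ IsAcuteFourCycle p r q s := by
  obtain ⟨o, hpr, hqs⟩ := hcross
  rcases le_total 0 ⟪q -ᵥ s, r -ᵥ p⟫ with h | h
  · exact .inl (isAcuteFourCycle_of_wbtw hnodup hpr hqs h)
  · have h_swap : 0 ≤ ⟪s -ᵥ q, r -ᵥ p⟫ := by
      rwa [← neg_vsub_eq_vsub_rev q s, inner_neg_left, neg_nonneg]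
    exact .inr (isAcuteFourCycle_of_wbtw (by grind) hpr (wbtw_comm.1 hqs) h_swap)

end InnerProductSpace

/-- Let `p, q, r, s` be four points in strictly convex position appearing in this cyclic order
along the boundary of their convex hull (equivalently, the diagonals `pr` and `qs` cross).
Then the 4-cycle `prsqp` is acute or the 4-cycle `prqsp` is acute. -/
theorem convex_position_acute_four_cycle
    (p q r s : Plane)
    (hne : p ≠ q ∧ p ≠ r ∧ p ≠ s ∧ q ≠ r ∧ q ≠ s ∧ r ≠ s)
    (hconv : StrictlyConvexPos p q r s)
    (horder : (segment ℝ p r ∩ segment ℝ q s).Nonempty) :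
    (EuclideanGeometry.angle q p r ≤ π / 2 ∧ EuclideanGeometry.angle p r s ≤ π / 2 ∧
     EuclideanGeometry.angle r s q ≤ π / 2 ∧ EuclideanGeometry.angle s q p ≤ π / 2) ∨
    (EuclideanGeometry.angle s p r ≤ π / 2 ∧ EuclideanGeometry.angle p r q ≤ π / 2 ∧
     EuclideanGeometry.angle r q s ≤ π / 2 ∧ EuclideanGeometry.angle q s p ≤ π / 2) := by
  rw [← affineSegment_eq_segment, ← affineSegment_eq_segment] at horder
  exact (convex_position_acute_four_cycle_general (by grind) horder).imp
    (·.angles_le) (·.angles_le)
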